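/- arXiv:1712.03345 — 8 statements merged into one kernel-verified Lean document; each statement's English description precedes it below -/
import Mathlib

section
/- Let S_a and S_b be integers with S_a > 1, S_b > 1 and gcd(S_a, S_b) = 1, and let S be the corresponding homomorphism on the golden mean language. Then the set of positive integers not belonging to S(L_GM) is finite, and its largest element (the Frobenius number of S(L_GM)) equals S_a·(S_a − 3) + S_b·(S_a − 1); that is, S_a² + S_a·S_b − 3·S_a − S_b is not of the form S(w) for any w in L_GM, while every strictly larger positive integer is. -/
/-- The golden mean language: nonempty words over `{a,b}` (here `a = false`,
`b = true`) in which the factor `bb` does not occur. -/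
def goldenMeanLang : Set (List Bool) :=
  {w | w ≠ [] ∧ ¬ [true, true] <:+: w}

/-- The homomorphism determined by `Sa = S(a)`, `Sb = S(b)`:
`S(w) = N_a(w)·Sa + N_b(w)·Sb`. -/
def wordValGM (Sa Sb : ℕ) (w : List Bool) : ℕ :=
  w.count false * Sa + w.count true * Sb

theorem gm_count_le : ∀ w : List Bool, ¬ [true, true] <:+: w →
    w.count true ≤ w.count false + 1
  | [], _ => by simp
  | [true], _ => by simp
  | false :: w, h => by
    have := gm_count_le w (fun h' => h (List.infix_cons h'))
    simp
    omega
  | true :: false :: w, h => by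
    have := gm_count_le w (fun h' => h (List.infix_cons (List.infix_cons h')))
    simp
    omega
  | true :: true :: w, h => by
    exact absurd (List.IsPrefix.isInfix ⟨w, rfl⟩) h

theorem gm_exists : ∀ j i : ℕ, j ≤ i + 1 → ∃ w : List Bool, ¬ [true, true] <:+: w ∧
    w.count false = i ∧ w.count true = j := by
  intro j
  induction j with
  | zero =>
    intro i _
    refine ⟨List.replicate i false, ?_, by simp, by simp [List.count_replicate]⟩
    intro h
    have := h.subset (a := true) (by simp)
    simp at this
  | succ j ih =>
    intro i h
    cases i with
    | zero =>
      obtain rfl : j = 0 := by omega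
      refine ⟨[true], ?_, by simp, by simp⟩
      intro h
      have := h.length_le
      simp at this
    | succ i =>
      obtain ⟨w, hw, h1, h2⟩ := ih i (by omega)
      refine ⟨true :: false :: w, ?_, by simp [h1], by simp [h2]⟩
      simp [List.infix_cons_iff, hw]

theorem gm_iff (Sa Sb n : ℕ) (hn : 0 < n) :
    (∃ w ∈ goldenMeanLang, wordValGM Sa Sb w = n) ↔
      ∃ i j : ℕ, j ≤ i + 1 ∧ i * Sa + j * Sb = n := by
  constructor
  · rintro ⟨w, ⟨_, hw⟩, rfl⟩
    exact ⟨_, _, gm_count_le w hw, rfl⟩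
  · rintro ⟨i, j, h, rfl⟩
    obtain ⟨w, hw, rfl, rfl⟩ := gm_exists j i h
    refine ⟨w, ⟨?_, hw⟩, rfl⟩
    rintro rfl
    simp at hn

theorem frobenius_golden_mean (Sa Sb : ℕ) (hSa : 1 < Sa) (hSb : 1 < Sb)
    (hgcd : Nat.gcd Sa Sb = 1) (F : ℕ)
    (hF : (F : ℤ) = (Sa : ℤ) ^ 2 + (Sa : ℤ) * Sb - 3 * Sa - Sb) :
    {n : ℕ | 0 < n ∧ n ∉ {m : ℕ | ∃ w ∈ goldenMeanLang, wordValGM Sa Sb w = m}}.Finite ∧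
    IsGreatest {n : ℕ | 0 < n ∧ n ∉ {m : ℕ | ∃ w ∈ goldenMeanLang, wordValGM Sa Sb w = m}} F := by
  have hco : IsCoprime (Sa : ℤ) (Sb : ℤ) := Nat.isCoprime_iff_coprime.mpr hgcd
  have hFpos : 0 < F := by
    have : (0 : ℤ) < F := by
      rw [hF]
      rcases Nat.lt_or_ge 2 Sa with h | h
      · have h1 : (3 : ℤ) ≤ Sa := by exact_mod_cast h
        have h2 : (2 : ℤ) ≤ Sb := by exact_mod_cast hSb
        nlinarith
      · obtain rfl : Sa = 2 := by omega
        have : Sb ≠ 2 := by rintro rfl; simp at hgcd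
        push_cast
        omega
    exact_mod_cast this
  have hup : ∀ n : ℕ, F < n → ∃ w ∈ goldenMeanLang, wordValGM Sa Sb w = n := by
    intro n hn
    rw [gm_iff _ _ _ (by omega)]
    have hn' : (F : ℤ) < n := by exact_mod_cast hn
    have ha : (0 : ℤ) < Sa := by omega
    have hb : (0 : ℤ) < Sb := by omega
    obtain ⟨u, v, huv⟩ := hco
    have hj0 := Int.emod_nonneg (v * n) ha.ne'
    have hj1 := Int.emod_lt_of_pos (v * n) ha
    have hd := Int.mul_ediv_add_emod (v * n) Sa
    set j := (v * n : ℤ) % Sa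
    set q := (v * n : ℤ) / Sa
    have hi : (u * n + q * Sb) * Sa + j * Sb = n := by
      linear_combination (n : ℤ) * huv + (Sb : ℤ) * hd
    generalize (u * n + q * Sb : ℤ) = i at hi
    have hige : (Sa : ℤ) - 3 < i := by
      have : ((Sa : ℤ) - 3) * Sa < i * Sa := by nlinarith
      exact lt_of_mul_lt_mul_right this ha.le
    refine ⟨i.toNat, j.toNat, by omega, ?_⟩
    zify
    rw [Int.toNat_of_nonneg (by omega), Int.toNat_of_nonneg hj0]
    exact hi
  refine ⟨(Set.finite_Iic F).subset ?_, ⟨hFpos, ?_⟩, ?_⟩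
  · rintro n ⟨_, h⟩
    by_contra hc
    exact h (hup n (by simpa using hc))
  · intro h
    obtain ⟨i, j, hij, h⟩ := (gm_iff _ _ _ hFpos).1 h
    have hz : (i : ℤ) * Sa + j * Sb = (Sa : ℤ) ^ 2 + (Sa : ℤ) * Sb - 3 * Sa - Sb := by
      rw [← hF, ← h]; push_cast; ring
    have hdvd : (Sa : ℤ) ∣ (j + 1) * Sb := ⟨Sa + Sb - 3 - i, by linear_combination hz⟩
    have hdvd' := Int.le_of_dvd (by omega) (hco.dvd_of_dvd_mul_right hdvd)
    have hij' : (j : ℤ) ≤ i + 1 := by exact_mod_cast hij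
    have h1 : (0 : ℤ) < Sa := by omega
    nlinarith
  · rintro n ⟨_, h⟩
    by_contra hc
    exact h (hup n (by simpa using hc))
end

section
/- Let α ∈ (0,1) be irrational, let L_α be the Sturmian language of α, let S be a homomorphism with values S_0 = S(0), S_1 = S(1), and let q_n = ⌊(n+1)α⌋ for n ≥ 0. Then S(L_α) = {(S_1 − S_0)·q_n + n·S_0 + S_0 : n ≥ 0} ∪ {(S_1 − S_0)·q_n + n·S_0 + S_1 : n ≥ 0}. -/
/-- `w` is a nonempty finite factor of the infinite word `f`. -/
def IsFactor {A : Type*} (f : ℕ → A) (w : List A) : Prop :=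
  w ≠ [] ∧ ∃ i : ℕ, w = (List.range w.length).map fun j => f (i + j)

/-- The lower mechanical word `s_α(n) = ⌊(n+1)α⌋ − ⌊nα⌋`. -/
noncomputable def sturmLow (α : ℝ) (n : ℕ) : ℤ :=
  ⌊((n : ℝ) + 1) * α⌋ - ⌊(n : ℝ) * α⌋

/-- The upper mechanical word `s'_α(n) = ⌈(n+1)α⌉ − ⌈nα⌉`. -/
noncomputable def sturmUp (α : ℝ) (n : ℕ) : ℤ :=
  ⌈((n : ℝ) + 1) * α⌉ - ⌈(n : ℝ) * α⌉

/-- The Sturmian language of `α`: nonempty factors of `s_α` or of `s'_α`. -/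
def sturmLang (α : ℝ) : Set (List ℤ) :=
  {w | IsFactor (sturmLow α) w ∨ IsFactor (sturmUp α) w}

/-- The homomorphism determined by `S0 = S(0)`, `S1 = S(1)`:
`S(w) = N_0(w)·S0 + N_1(w)·S1`. -/
def wordVal01 (S0 S1 : ℕ) (w : List ℤ) : ℕ :=
  w.count 0 * S0 + w.count 1 * S1

theorem count_aux (F : ℕ → ℤ) (h : ∀ n, F (n + 1) - F n = 0 ∨ F (n + 1) - F n = 1) (i N : ℕ) :
    ((((List.range N).map fun j => F (i + j + 1) - F (i + j)).count 1 : ℕ) : ℤ) = F (i + N) - F i ∧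
    ((((List.range N).map fun j => F (i + j + 1) - F (i + j)).count 0 : ℕ) : ℤ)
      = N - (F (i + N) - F i) := by
  induction N with
  | zero => simp
  | succ N ih =>
    obtain ⟨h1, h0⟩ := ih
    rw [List.range_succ, List.map_append, List.count_append, List.count_append]
    push_cast
    rw [h1, h0, ← add_assoc]
    rcases h (i + N) with e | e <;> simp [e] <;> constructor <;> linarith

theorem val_aux (F : ℕ → ℤ) (h : ∀ n, F (n + 1) - F n = 0 ∨ F (n + 1) - F n = 1) (i N : ℕ)
    (S0 S1 : ℕ) :
    ((wordVal01 S0 S1 ((List.range N).map fun j => F (i + j + 1) - F (i + j)) : ℕ) : ℤ)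
      = ((S1 : ℤ) - S0) * (F (i + N) - F i) + N * S0 := by
  obtain ⟨h1, h0⟩ := count_aux F h i N
  unfold wordVal01
  push_cast
  rw [h1, h0]
  ring

theorem low_eq (α : ℝ) : sturmLow α = fun n : ℕ => ⌊((n + 1 : ℕ) : ℝ) * α⌋ - ⌊(n : ℝ) * α⌋ := by
  funext n; simp [sturmLow]

theorem up_eq (α : ℝ) : sturmUp α = fun n : ℕ => ⌈((n + 1 : ℕ) : ℝ) * α⌉ - ⌈(n : ℝ) * α⌉ := by
  funext n; simp [sturmUp]

theorem low_diff (α : ℝ) (i N : ℕ) :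
    ⌊((i + N : ℕ) : ℝ) * α⌋ - ⌊(i : ℝ) * α⌋ = ⌊(N : ℝ) * α⌋ ∨
    ⌊((i + N : ℕ) : ℝ) * α⌋ - ⌊(i : ℝ) * α⌋ = ⌊(N : ℝ) * α⌋ + 1 := by
  have h1 := Int.le_floor_add ((i : ℝ) * α) ((N : ℝ) * α)
  have h2 := Int.le_floor_add_floor ((i : ℝ) * α) ((N : ℝ) * α)
  push_cast
  rw [add_mul]
  omega

theorem up_diff (α : ℝ) (i N : ℕ) :
    ⌈((i + N : ℕ) : ℝ) * α⌉ - ⌈(i : ℝ) * α⌉ = ⌈(N : ℝ) * α⌉ - 1 ∨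
    ⌈((i + N : ℕ) : ℝ) * α⌉ - ⌈(i : ℝ) * α⌉ = ⌈(N : ℝ) * α⌉ := by
  have h1 := Int.ceil_add_le ((i : ℝ) * α) ((N : ℝ) * α)
  have h2 := Int.ceil_add_ceil_le ((i : ℝ) * α) ((N : ℝ) * α)
  push_cast
  rw [add_mul]
  omega

theorem ceil_eq_aux (α : ℝ) (hirr : Irrational α) (n : ℕ) :
    ⌈((n + 1 : ℕ) : ℝ) * α⌉ = ⌊((n + 1 : ℕ) : ℝ) * α⌋ + 1 := by
  have hx : Irrational (((n + 1 : ℕ) : ℝ) * α) := hirr.natCast_mul (Nat.succ_ne_zero n)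
  rw [Int.ceil_eq_iff]
  push_cast
  have h1 := Int.floor_le (((n + 1 : ℕ) : ℝ) * α)
  have h2 := Int.lt_floor_add_one (((n + 1 : ℕ) : ℝ) * α)
  have h3 := hx.ne_int ⌊((n + 1 : ℕ) : ℝ) * α⌋
  push_cast at *
  refine ⟨?_, h2.le⟩
  have := lt_of_le_of_ne h1 h3.symm
  linarith

theorem low_step (α : ℝ) (hα0 : 0 < α) (hα1 : α < 1) (n : ℕ) :
    ⌊((n + 1 : ℕ) : ℝ) * α⌋ - ⌊(n : ℝ) * α⌋ = 0 ∨
    ⌊((n + 1 : ℕ) : ℝ) * α⌋ - ⌊(n : ℝ) * α⌋ = 1 := by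
  have h : ⌊((1 : ℕ) : ℝ) * α⌋ = 0 := by
    rw [Int.floor_eq_zero_iff]; simp [hα0.le, hα1]
  have := low_diff α n 1
  rwa [h, zero_add] at this

theorem up_step (α : ℝ) (hα0 : 0 < α) (hα1 : α < 1) (n : ℕ) :
    ⌈((n + 1 : ℕ) : ℝ) * α⌉ - ⌈(n : ℝ) * α⌉ = 0 ∨
    ⌈((n + 1 : ℕ) : ℝ) * α⌉ - ⌈(n : ℝ) * α⌉ = 1 := by
  have h : ⌈((1 : ℕ) : ℝ) * α⌉ = 1 := by
    rw [Int.ceil_eq_iff]; simp [hα0, hα1.le]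
  have := up_diff α n 1
  rwa [h, sub_self] at this

theorem sturmian_image (α : ℝ) (hα0 : 0 < α) (hα1 : α < 1) (hirr : Irrational α)
    (S0 S1 : ℕ) (hS0 : 0 < S0) (hS1 : 0 < S1) :
    {m : ℕ | ∃ w ∈ sturmLang α, wordVal01 S0 S1 w = m} =
      {m : ℕ | ∃ n : ℕ,
        (m : ℤ) = ((S1 : ℤ) - S0) * ⌊((n : ℝ) + 1) * α⌋ + n * S0 + S0 ∨
        (m : ℤ) = ((S1 : ℤ) - S0) * ⌊((n : ℝ) + 1) * α⌋ + n * S0 + S1} := by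
  ext m
  have hL := val_aux (fun n : ℕ => ⌊(n : ℝ) * α⌋) (low_step α hα0 hα1)
  have hU := val_aux (fun n : ℕ => ⌈(n : ℝ) * α⌉) (up_step α hα0 hα1)
  have hc : ∀ n : ℕ, ((n : ℝ) + 1) = ((n + 1 : ℕ) : ℝ) := fun n => by push_cast; rfl
  simp only [Set.mem_ofPred_eq, hc]
  constructor
  · rintro ⟨w, hw | hw, rfl⟩
    · obtain ⟨hne, i, hw⟩ := hw
      obtain ⟨n, hn⟩ := Nat.exists_eq_succ_of_ne_zero (mt List.length_eq_zero_iff.1 hne)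
      rw [hn, low_eq] at hw
      refine ⟨n, ?_⟩
      rw [hw]
      have := hL i (n + 1) S0 S1
      simp only [Nat.succ_eq_add_one] at this ⊢
      rw [this]
      rcases low_diff α i (n + 1) with e | e <;> rw [e]
      · left; push_cast; ring
      · right; push_cast; ring
    · obtain ⟨hne, i, hw⟩ := hw
      obtain ⟨n, hn⟩ := Nat.exists_eq_succ_of_ne_zero (mt List.length_eq_zero_iff.1 hne)
      rw [hn, up_eq] at hw
      refine ⟨n, ?_⟩
      rw [hw]
      have := hU i (n + 1) S0 S1
      simp only [Nat.succ_eq_add_one] at this ⊢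
      rw [this]
      rcases up_diff α i (n + 1) with e | e <;> rw [e, ceil_eq_aux α hirr]
      · left; push_cast; ring
      · right; push_cast; ring
  · rintro ⟨n, h | h⟩
    · refine ⟨(List.range (n + 1)).map fun j => sturmLow α (0 + j),
        Or.inl ⟨by simp, 0, by simp⟩, ?_⟩
      have := hL 0 (n + 1) S0 S1
      rw [low_eq]
      rw [← Int.natCast_inj]
      rw [h]
      refine this.trans ?_
      simp only [zero_add, Nat.cast_zero, zero_mul, Int.floor_zero]
      push_cast; ring
    · refine ⟨(List.range (n + 1)).map fun j => sturmUp α (0 + j),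
        Or.inr ⟨by simp, 0, by simp⟩, ?_⟩
      have := hU 0 (n + 1) S0 S1
      rw [up_eq]
      rw [← Int.natCast_inj]
      rw [h]
      refine this.trans ?_
      simp only [zero_add, Nat.cast_zero, zero_mul, Int.ceil_zero, ceil_eq_aux α hirr]
      push_cast; ring
end

section
/- Let S be a homomorphism of the Fibonacci language L_F. If (S(0), S(1)) is one of the pairs (1,1), (2,1) or (1,2), then S(L_F) = ℕ, the set of all positive integers. -/
/-- The golden mean `Φ = (1+√5)/2`. -/
noncomputable def Phi : ℝ := (1 + Real.sqrt 5) / 2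

/-- The Fibonacci word `c(n) = ⌊(n+2)α⌋ − ⌊(n+1)α⌋` with `α = 2 − Φ`. -/
noncomputable def fibWord (n : ℕ) : ℤ :=
  ⌊((n : ℝ) + 2) * (2 - Phi)⌋ - ⌊((n : ℝ) + 1) * (2 - Phi)⌋

/-- The infinite word `0c`: the Fibonacci word prefixed by `0`. -/
noncomputable def fibWord0 (n : ℕ) : ℤ :=
  if n = 0 then 0 else fibWord (n - 1)

/-- The infinite word `1c`: the Fibonacci word prefixed by `1`. -/
noncomputable def fibWord1 (n : ℕ) : ℤ :=
  if n = 0 then 1 else fibWord (n - 1)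

/-- The Fibonacci language: nonempty finite factors of `0c` or of `1c`. -/
def fibLang : Set (List ℤ) :=
  {w | IsFactor fibWord0 w ∨ IsFactor fibWord1 w}

theorem fibWord_zero_or_one (n : ℕ) : fibWord n = 0 ∨ fibWord n = 1 := by
  have h5 : Real.sqrt 5 ^ 2 = 5 := Real.sq_sqrt (by norm_num)
  have h0 : 0 ≤ Real.sqrt 5 := Real.sqrt_nonneg 5
  have hlt : Real.sqrt 5 < 3 := by nlinarith
  have hgt : 1 < Real.sqrt 5 := by nlinarith
  have ha0 : 0 < 2 - Phi := by unfold Phi; linarith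
  have ha1 : 2 - Phi < 1 := by unfold Phi; linarith
  unfold fibWord
  generalize 2 - Phi = a at *
  have e : ((n : ℝ) + 2) * a = ((n : ℝ) + 1) * a + a := by ring
  rw [e]
  generalize ((n : ℝ) + 1) * a = x
  have h1 : ⌊x⌋ ≤ ⌊x + a⌋ := Int.floor_le_floor (by linarith)
  have h2 : ⌊x + a⌋ < ⌊x⌋ + 2 := by
    rw [Int.floor_lt]
    push_cast
    linarith [Int.lt_floor_add_one x]
  omega

theorem fibWord0_zero_or_one (n : ℕ) : fibWord0 n = 0 ∨ fibWord0 n = 1 := by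
  unfold fibWord0
  split_ifs
  · simp
  · exact fibWord_zero_or_one _

theorem fibWord1_zero_or_one (n : ℕ) : fibWord1 n = 0 ∨ fibWord1 n = 1 := by
  unfold fibWord1
  split_ifs
  · simp
  · exact fibWord_zero_or_one _

theorem wordVal01_pos_of_factor (S0 S1 : ℕ) (h0 : 0 < S0) (h1 : 0 < S1) (f : ℕ → ℤ)
    (hf : ∀ n, f n = 0 ∨ f n = 1) (w : List ℤ) (hw : IsFactor f w) :
    0 < wordVal01 S0 S1 w := by
  obtain ⟨hne, i, hi⟩ := hw
  obtain ⟨x, hx⟩ := List.exists_mem_of_ne_nil w hne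
  have hx01 : x = 0 ∨ x = 1 := by
    rw [hi] at hx
    obtain ⟨j, -, rfl⟩ := List.mem_map.1 hx
    exact hf _
  unfold wordVal01
  rcases hx01 with rfl | rfl
  · have := Nat.mul_pos (List.count_pos_iff.2 hx) h0
    omega
  · have := Nat.mul_pos (List.count_pos_iff.2 hx) h1
    omega

/-- The prefix of length `n` of the Fibonacci word. -/
noncomputable def fibPre (n : ℕ) : List ℤ := (List.range n).map fibWord

theorem fibPre_mem (n : ℕ) (hn : 0 < n) : fibPre n ∈ fibLang := by
  left
  refine ⟨?_, 1, ?_⟩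
  · intro h
    have := congrArg List.length h
    simp [fibPre] at this
    omega
  · simp only [fibPre, List.length_map, List.length_range]
    apply List.map_congr_left
    intro j _
    simp [fibWord0]

theorem cons0_mem (n : ℕ) : (0 :: fibPre n) ∈ fibLang := by
  left
  refine ⟨by simp, 0, ?_⟩
  simp only [fibPre, List.length_cons, List.length_map, List.length_range,
    List.range_succ_eq_map, List.map_cons, List.map_map]
  congr 1
  apply List.map_congr_left
  intro j _
  simp [fibWord0, fibWord1]

theorem cons1_mem (n : ℕ) : (1 :: fibPre n) ∈ fibLang := by
  right
  refine ⟨by simp, 0, ?_⟩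
  simp only [fibPre, List.length_cons, List.length_map, List.length_range,
    List.range_succ_eq_map, List.map_cons, List.map_map]
  congr 1
  apply List.map_congr_left
  intro j _
  simp [fibWord0, fibWord1]

theorem val_succ (S0 S1 n : ℕ) : wordVal01 S0 S1 (fibPre (n + 1)) = wordVal01 S0 S1 (fibPre n) + S0
    ∨ wordVal01 S0 S1 (fibPre (n + 1)) = wordVal01 S0 S1 (fibPre n) + S1 := by
  have e : fibPre (n + 1) = fibPre n ++ [fibWord n] := by
    simp [fibPre, List.range_succ]
  rw [e]
  rcases fibWord_zero_or_one n with h | h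
  · left
    simp [wordVal01, h]
    ring
  · right
    simp [wordVal01, h]
    ring

theorem val_hit (S0 S1 : ℕ) (h0 : S0 = 1 ∨ S0 = 2) (h1 : S1 = 1 ∨ S1 = 2) (m : ℕ) :
    ∃ n, wordVal01 S0 S1 (fibPre n) = m ∨ wordVal01 S0 S1 (fibPre n) + 1 = m := by
  induction m with
  | zero => exact ⟨0, by simp [fibPre, wordVal01]⟩
  | succ m ih =>
    obtain ⟨n, h | h⟩ := ih
    · exact ⟨n, by omega⟩
    · refine ⟨n + 1, ?_⟩
      have := val_succ S0 S1 n
      omega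

theorem fib_image_is_N_easy (S0 S1 : ℕ)
    (h : (S0, S1) = (1, 1) ∨ (S0, S1) = (2, 1) ∨ (S0, S1) = (1, 2)) :
    {m : ℕ | ∃ w ∈ fibLang, wordVal01 S0 S1 w = m} = {n : ℕ | 0 < n} := by
  simp only [Prod.mk.injEq] at h
  ext m
  simp only [Set.mem_ofPred_eq]
  constructor
  · rintro ⟨w, hw | hw, rfl⟩
    · exact wordVal01_pos_of_factor S0 S1 (by omega) (by omega) _ fibWord0_zero_or_one w hw
    · exact wordVal01_pos_of_factor S0 S1 (by omega) (by omega) _ fibWord1_zero_or_one w hw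
  · intro hm
    obtain ⟨n, hn | hn⟩ := val_hit S0 S1 (by omega) (by omega) m
    · refine ⟨fibPre n, fibPre_mem n ?_, hn⟩
      rcases Nat.eq_zero_or_pos n with rfl | hp
      · simp [fibPre, wordVal01] at hn
        omega
      · exact hp
    · have hS : S0 = 1 ∨ S1 = 1 := by omega
      rcases hS with rfl | rfl
      · refine ⟨_, cons0_mem n, ?_⟩
        rw [← hn]
        simp [wordVal01]
        ring
      · refine ⟨_, cons1_mem n, ?_⟩
        rw [← hn]
        simp [wordVal01]
        ring
end

section
/- Let Φ = (1+√5)/2 and define u_n = −2⌊nΦ⌋ + 5n − 2 for n ≥ 1. Then for every n ≥ 1 the difference u_{n+1} − u_n belongs to {1, 3}, and whenever u_{n+1} − u_n = 3 for some n ≥ 2, one has u_n − u_{n−1} = 1 (i.e., the difference sequence contains no two consecutive 3's). -/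
theorem fib_difference_sequence (u : ℕ → ℤ)
    (hu : ∀ n : ℕ, u n = -2 * ⌊(n : ℝ) * Phi⌋ + 5 * n - 2) :
    (∀ n : ℕ, 1 ≤ n → u (n + 1) - u n = 1 ∨ u (n + 1) - u n = 3) ∧
    (∀ n : ℕ, 2 ≤ n → u (n + 1) - u n = 3 → u n - u (n - 1) = 1) := by
  have h1 : (3 : ℝ) / 2 < Phi := by
    have : (2 : ℝ) < Real.sqrt 5 := Real.lt_sqrt_of_sq_lt (by norm_num)
    unfold Phi; linarith
  have h2 : Phi < 2 := by
    have : Real.sqrt 5 < 3 := (Real.sqrt_lt' (by norm_num)).2 (by norm_num)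
    unfold Phi; linarith
  have key : ∀ n : ℕ, ⌊(n : ℝ) * Phi⌋ + 1 ≤ ⌊((n + 1 : ℕ) : ℝ) * Phi⌋ ∧
      ⌊((n + 1 : ℕ) : ℝ) * Phi⌋ ≤ ⌊(n : ℝ) * Phi⌋ + 2 := by
    intro n
    have a := Int.floor_le ((n : ℝ) * Phi)
    have b := Int.lt_floor_add_one ((n : ℝ) * Phi)
    constructor
    · apply Int.le_floor.2
      push_cast
      linarith
    · apply Int.lt_add_one_iff.1
      apply Int.floor_lt.2
      push_cast
      linarith
  have key2 : ∀ n : ℕ, ⌊(n : ℝ) * Phi⌋ + 3 ≤ ⌊((n + 1 + 1 : ℕ) : ℝ) * Phi⌋ := by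
    intro n
    have a := Int.floor_le ((n : ℝ) * Phi)
    apply Int.le_floor.2
    push_cast
    linarith
  constructor
  · intro n _
    have h := key n
    rw [hu, hu]
    push_cast at h ⊢
    omega
  · intro n hn
    obtain ⟨m, rfl⟩ : ∃ m, n = m + 1 := ⟨n - 1, by omega⟩
    have h := key m
    have h' := key (m + 1)
    have h3 := key2 m
    rw [Nat.add_sub_cancel, hu, hu, hu]
    push_cast at h h' h3 ⊢
    omega
end

section
/- Let S be the homomorphism of the Fibonacci language L_F with S(0) = 3 and S(1) = 2, and let Φ = (1+√5)/2. Then S(L_F) = {⌊nΦ²⌋ : n ≥ 1} ∪ {⌊nΦ²⌋ + 1 : n ≥ 1}. -/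
/-- telescoping primitive of `0c` -/
noncomputable def flA (n : ℕ) : ℤ := ⌊(n : ℝ) * (2 - Phi)⌋

/-- telescoping primitive of `1c` -/
noncomputable def flB (n : ℕ) : ℤ := if n = 0 then 0 else flA n + 1

lemma phi_sq : Phi ^ 2 = 3 - (2 - Phi) := by
  have h : Real.sqrt 5 ^ 2 = 5 := Real.sq_sqrt (by norm_num)
  unfold Phi
  nlinarith

lemma phi_bounds : 1 < Phi ∧ Phi < 2 := by
  have h : Real.sqrt 5 ^ 2 = 5 := Real.sq_sqrt (by norm_num)
  have h0 := Real.sqrt_nonneg 5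
  unfold Phi
  constructor <;> nlinarith

lemma phi_irr : Irrational Phi := Real.goldenRatio_irrational

lemma flA_zero : flA 0 = 0 := by simp [flA]

lemma flA_one : flA 1 = 0 := by
  have := phi_bounds
  unfold flA
  rw [Int.floor_eq_iff]
  push_cast
  constructor <;> linarith

lemma flA_lt (n : ℕ) (hn : 1 ≤ n) : (flA n : ℝ) < (n : ℝ) * (2 - Phi) := by
  refine lt_of_le_of_ne (Int.floor_le _) ?_
  intro h
  have hn' : (n : ℝ) ≠ 0 := by positivity
  apply phi_irr
  refine ⟨2 - (flA n : ℚ) / n, ?_⟩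
  push_cast
  field_simp
  linarith

lemma floor_phi_sq (n : ℕ) (hn : 1 ≤ n) : ⌊(n : ℝ) * Phi ^ 2⌋ = 3 * n - flA n - 1 := by
  have h1 := flA_lt n hn
  have h2 : (n : ℝ) * (2 - Phi) < flA n + 1 := Int.lt_floor_add_one _
  rw [Int.floor_eq_iff, phi_sq]
  push_cast
  constructor <;> linarith

/-- Subadditivity bounds for the floors. -/
lemma flA_add (i n : ℕ) : flA (i + n) - flA i = flA n ∨ flA (i + n) - flA i = flA n + 1 := by
  have a1 : (flA i : ℝ) ≤ (i : ℝ) * (2 - Phi) := Int.floor_le _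
  have a2 : (i : ℝ) * (2 - Phi) < flA i + 1 := Int.lt_floor_add_one _
  have b1 : (flA n : ℝ) ≤ (n : ℝ) * (2 - Phi) := Int.floor_le _
  have b2 : (n : ℝ) * (2 - Phi) < flA n + 1 := Int.lt_floor_add_one _
  have c1 : (flA (i + n) : ℝ) ≤ ((i + n : ℕ) : ℝ) * (2 - Phi) := Int.floor_le _
  have c2 : ((i + n : ℕ) : ℝ) * (2 - Phi) < flA (i + n) + 1 := Int.lt_floor_add_one _
  push_cast at c1 c2
  have d1 : (flA i + flA n : ℝ) < flA (i + n) + 1 := by linarith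
  have d2 : (flA (i + n) : ℝ) < flA i + flA n + 2 := by linarith
  have e1 : flA i + flA n < flA (i + n) + 1 := by exact_mod_cast d1
  have e2 : flA (i + n) < flA i + flA n + 2 := by exact_mod_cast d2
  omega

lemma fibWord0_eq (n : ℕ) : fibWord0 n = flA (n + 1) - flA n := by
  rcases n with _ | n
  · simp [fibWord0, flA_zero, flA_one]
  · simp only [fibWord0, fibWord, flA]
    push_cast
    simp
    ring_nf

lemma fibWord1_eq (n : ℕ) : fibWord1 n = flB (n + 1) - flB n := by
  rcases n with _ | n
  · simp [fibWord1, flB, flA_one]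
  · have h := fibWord0_eq (n + 1)
    simp only [fibWord0, fibWord1, flB] at *
    simp at *
    exact h

lemma flB_add (i n : ℕ) (hn : 1 ≤ n) :
    flB (i + n) - flB i = flA n ∨ flB (i + n) - flB i = flA n + 1 := by
  have h := flA_add i n
  have hn0 : n ≠ 0 := by omega
  by_cases hi : i = 0
  · subst hi
    simp [flB, hn0]
  · have : i + n ≠ 0 := by omega
    simp only [flB, hi, this, if_false]
    omega

/-- Value of a word read off a 0/1 sequence with primitive `g`. -/
lemma wordVal_map (g : ℕ → ℤ) (f : ℕ → ℤ) (hf : ∀ k, f k = g (k + 1) - g k)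
    (h01 : ∀ k, f k = 0 ∨ f k = 1) (i n : ℕ) :
    (wordVal01 3 2 ((List.range n).map fun j => f (i + j)) : ℤ) = 3 * n - (g (i + n) - g i) := by
  induction n with
  | zero => simp [wordVal01]
  | succ n ih =>
    have e := hf (i + n)
    unfold wordVal01 at *
    rw [List.range_succ, List.map_append, List.count_append, List.count_append]
    have : i + (n + 1) = i + n + 1 := by ring
    rw [this]
    rcases h01 (i + n) with h | h <;> simp [h] at * <;> linarith

lemma fib0_01 (k : ℕ) : fibWord0 k = 0 ∨ fibWord0 k = 1 := by
  have h := flA_add k 1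
  rw [flA_one] at h
  rw [fibWord0_eq]
  omega

lemma fib1_01 (k : ℕ) : fibWord1 k = 0 ∨ fibWord1 k = 1 := by
  have h := flB_add k 1 le_rfl
  rw [flA_one] at h
  rw [fibWord1_eq]
  omega

theorem fib_image_three_two :
    {m : ℕ | ∃ w ∈ fibLang, wordVal01 3 2 w = m} =
      {m : ℕ | ∃ n : ℕ, 1 ≤ n ∧
        ((m : ℤ) = ⌊(n : ℝ) * Phi ^ 2⌋ ∨ (m : ℤ) = ⌊(n : ℝ) * Phi ^ 2⌋ + 1)} := by
  ext m
  simp only [Set.mem_ofPred_eq]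
  constructor
  · rintro ⟨w, hw, rfl⟩
    refine ⟨w.length, ?_⟩
    rcases hw with ⟨hne, i, h⟩ | ⟨hne, i, h⟩
    · have hl : 1 ≤ w.length := List.length_pos_iff.mpr hne
      refine ⟨hl, ?_⟩
      have hv := wordVal_map flA fibWord0 fibWord0_eq fib0_01 i w.length
      rw [← h] at hv
      have := flA_add i w.length
      rw [floor_phi_sq _ hl, hv]
      omega
    · have hl : 1 ≤ w.length := List.length_pos_iff.mpr hne
      refine ⟨hl, ?_⟩
      have hv := wordVal_map flB fibWord1 fibWord1_eq fib1_01 i w.length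
      rw [← h] at hv
      have := flB_add i w.length hl
      rw [floor_phi_sq _ hl, hv]
      omega
  · rintro ⟨n, hn, h⟩
    rw [floor_phi_sq n hn] at h
    have hn0 : n ≠ 0 := by omega
    rcases h with h | h
    · refine ⟨(List.range n).map fun j => fibWord1 (0 + j), Or.inr ⟨?_, 0, by simp⟩, ?_⟩
      · simpa using hn0
      · have hv := wordVal_map flB fibWord1 fibWord1_eq fib1_01 0 n
        have e : flB (0 + n) - flB 0 = flA n + 1 := by simp [flB, hn0]
        rw [e] at hv
        omega
    · refine ⟨(List.range n).map fun j => fibWord0 (0 + j), Or.inl ⟨?_, 0, by simp⟩, ?_⟩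
      · simpa using hn0
      · have hv := wordVal_map flA fibWord0 fibWord0_eq fib0_01 0 n
        have e : flA (0 + n) - flA 0 = flA n := by simp [flA_zero]
        rw [e] at hv
        omega
end

section
/- Let Φ = (1+√5)/2. The three sets {⌊nΦ⌋ + n : n ≥ 1}, {⌊nΦ⌋ + n + 1 : n ≥ 1} and {2⌊nΦ⌋ + n + 1 : n ≥ 0} form a complementary triple: they are pairwise disjoint and their union is the set of all positive integers. -/
theorem Phi_eq_gold : Phi = Real.goldenRatio := rfl

theorem Phi_sq' : Phi * Phi = Phi + 1 := by
  rw [Phi_eq_gold, ← sq]; exact Real.goldenRatio_sq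

theorem Phi_gt : 1 < Phi := Real.one_lt_goldenRatio

theorem Phi_lt : Phi < 2 := Real.goldenRatio_lt_two

/-- `b(n) = ⌊n(Φ+1)⌋`. -/
theorem floor_b (n : ℕ) : ⌊(n : ℝ) * (Phi + 1)⌋ = ⌊(n : ℝ) * Phi⌋ + n := by
  rw [mul_add, mul_one, Int.floor_add_natCast]

theorem floor_a_succ (n : ℕ) :
    ⌊((⌊(n : ℝ) * Phi⌋ + 1 : ℤ) : ℝ) * Phi⌋ = ⌊(n : ℝ) * Phi⌋ + n + 1 := by
  have h1 := Int.floor_le ((n : ℝ) * Phi)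
  have h2 := Int.lt_floor_add_one ((n : ℝ) * Phi)
  generalize ⌊(n : ℝ) * Phi⌋ = a at *
  have hs := Phi_sq'
  have hg := Phi_gt
  have hl := Phi_lt
  have e : (n : ℝ) * Phi * Phi = n * Phi + n := by rw [mul_assoc, hs]; ring
  rw [Int.floor_eq_iff]
  push_cast
  constructor
  · nlinarith
  · nlinarith

theorem floor_b_succ (n : ℕ) :
    ⌊((⌊(n : ℝ) * Phi⌋ + n + 1 : ℤ) : ℝ) * Phi⌋ = 2 * ⌊(n : ℝ) * Phi⌋ + n + 1 := by
  have h1 := Int.floor_le ((n : ℝ) * Phi)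
  have h2 := Int.lt_floor_add_one ((n : ℝ) * Phi)
  generalize ⌊(n : ℝ) * Phi⌋ = a at *
  have hs := Phi_sq'
  have hg := Phi_gt
  have hl := Phi_lt
  have e : (n : ℝ) * Phi * Phi = n * Phi + n := by rw [mul_assoc, hs]; ring
  rw [Int.floor_eq_iff]
  push_cast
  constructor
  · nlinarith
  · nlinarith

theorem floor_inj (x y : ℤ) (h : ⌊(x : ℝ) * Phi⌋ = ⌊(y : ℝ) * Phi⌋) : x = y := by
  have key : ∀ x y : ℤ, x < y → ⌊(x : ℝ) * Phi⌋ < ⌊(y : ℝ) * Phi⌋ := by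
    intro x y hxy
    rw [Int.lt_iff_add_one_le, Int.le_floor]
    have h1 := Int.floor_le ((x : ℝ) * Phi)
    have h3 : (x : ℝ) + 1 ≤ y := by exact_mod_cast hxy
    have hg := Phi_gt
    push_cast
    nlinarith
  rcases lt_trichotomy x y with h' | h' | h'
  · have := key _ _ h'; omega
  · exact h'
  · have := key _ _ h'; omega

theorem beatty_gold :
    symmDiff {x : ℤ | ∃ k > 0, beattySeq Phi k = x}
      {x : ℤ | ∃ k > 0, beattySeq (Phi + 1) k = x} = {n : ℤ | 0 < n} := by
  have hc : Phi.HolderConjugate (Phi + 1) := by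
    rw [Real.holderConjugate_iff]
    have hg := Phi_gt
    have hs := Phi_sq'
    refine ⟨hg, ?_⟩
    have : Phi ≠ 0 := by linarith
    have : Phi + 1 ≠ 0 := by linarith
    field_simp
    nlinarith
  exact Irrational.beattySeq_symmDiff_beattySeq_pos hc Real.goldenRatio_irrational

theorem beatty_disj (k : ℤ) (hk : 0 < k) (n : ℕ) (hn : 1 ≤ n) :
    ⌊(k : ℝ) * Phi⌋ ≠ ⌊(n : ℝ) * Phi⌋ + n := by
  intro h
  have hA : ⌊(k : ℝ) * Phi⌋ ∈ {x : ℤ | ∃ k > 0, beattySeq Phi k = x} := ⟨k, hk, rfl⟩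
  have hB : ⌊(k : ℝ) * Phi⌋ ∈ {x : ℤ | ∃ k > 0, beattySeq (Phi + 1) k = x} := by
    refine ⟨n, by exact_mod_cast hn, ?_⟩
    rw [h, ← floor_b]; simp [beattySeq]
  have hm : ⌊(k : ℝ) * Phi⌋ ∈ {n : ℤ | 0 < n} := by
    have : (1 : ℝ) ≤ k := by exact_mod_cast hk
    have hg := Phi_gt
    have h1 : (1 : ℤ) ≤ ⌊(k : ℝ) * Phi⌋ := by
      rw [Int.le_floor]; push_cast; nlinarith
    show (0 : ℤ) < _
    omega
  rw [← beatty_gold, Set.mem_symmDiff] at hm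
  tauto

theorem beatty_cover (m : ℤ) (hm : 0 < m) :
    (∃ n : ℕ, 1 ≤ n ∧ m = ⌊(n : ℝ) * Phi⌋) ∨ ∃ n : ℕ, 1 ≤ n ∧ m = ⌊(n : ℝ) * Phi⌋ + n := by
  have h : m ∈ {n : ℤ | 0 < n} := hm
  rw [← beatty_gold, Set.mem_symmDiff] at h
  rcases h with ⟨⟨k, hk, h⟩, -⟩ | ⟨⟨k, hk, h⟩, -⟩
  · lift k to ℕ using hk.le
    exact Or.inl ⟨k, by exact_mod_cast hk, by rw [← h]; simp [beattySeq]⟩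
  · lift k to ℕ using hk.le
    exact Or.inr ⟨k, by exact_mod_cast hk, by rw [← h, ← floor_b]; simp [beattySeq]⟩

theorem floor_a_pos (n : ℕ) (hn : 1 ≤ n) : 0 < ⌊(n : ℝ) * Phi⌋ := by
  have : (1 : ℝ) ≤ n := by exact_mod_cast hn
  have hg := Phi_gt
  have h1 : (1 : ℤ) ≤ ⌊(n : ℝ) * Phi⌋ := by
    rw [Int.le_floor]; push_cast; nlinarith
  omega

theorem floor_a_nonneg (n : ℕ) : 0 ≤ ⌊(n : ℝ) * Phi⌋ := by
  have hg := Phi_gt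
  exact Int.floor_nonneg.2 (mul_nonneg (Nat.cast_nonneg n) (by linarith))



theorem complementary_triple_one :
    (Disjoint {m : ℤ | ∃ n : ℕ, 1 ≤ n ∧ m = ⌊(n : ℝ) * Phi⌋ + n}
              {m : ℤ | ∃ n : ℕ, 1 ≤ n ∧ m = ⌊(n : ℝ) * Phi⌋ + n + 1} ∧
     Disjoint {m : ℤ | ∃ n : ℕ, 1 ≤ n ∧ m = ⌊(n : ℝ) * Phi⌋ + n}
              {m : ℤ | ∃ n : ℕ, m = 2 * ⌊(n : ℝ) * Phi⌋ + n + 1} ∧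
     Disjoint {m : ℤ | ∃ n : ℕ, 1 ≤ n ∧ m = ⌊(n : ℝ) * Phi⌋ + n + 1}
              {m : ℤ | ∃ n : ℕ, m = 2 * ⌊(n : ℝ) * Phi⌋ + n + 1}) ∧
    {m : ℤ | ∃ n : ℕ, 1 ≤ n ∧ m = ⌊(n : ℝ) * Phi⌋ + n} ∪
      {m : ℤ | ∃ n : ℕ, 1 ≤ n ∧ m = ⌊(n : ℝ) * Phi⌋ + n + 1} ∪
      {m : ℤ | ∃ n : ℕ, m = 2 * ⌊(n : ℝ) * Phi⌋ + n + 1} =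
      {m : ℤ | 0 < m} := by
  refine ⟨⟨?_, ?_, ?_⟩, ?_⟩
  · rw [Set.disjoint_left]
    rintro m ⟨n, hn, h⟩ ⟨n', hn', h'⟩
    rw [← floor_a_succ] at h'
    exact beatty_disj _ (by have := floor_a_nonneg n'; omega) n hn (h'.symm.trans h)
  · rw [Set.disjoint_left]
    rintro m ⟨n, hn, h⟩ ⟨n', h'⟩
    rw [← floor_b_succ] at h'
    exact beatty_disj _ (by have := floor_a_nonneg n'; omega) n hn (h'.symm.trans h)
  · rw [Set.disjoint_left]
    rintro m ⟨n, hn, h⟩ ⟨n', h'⟩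
    rw [← floor_a_succ] at h
    rw [← floor_b_succ] at h'
    have e := floor_inj _ _ (h.symm.trans h')
    have hp := floor_a_pos n hn
    rcases Nat.eq_zero_or_pos n' with h0 | h0
    · subst h0
      simp only [Nat.cast_zero, zero_mul, Int.floor_zero] at e
      omega
    · refine beatty_disj n (by exact_mod_cast hn) n' h0 ?_
      push_cast
      omega
  · ext m
    constructor
    · rintro ((⟨n, hn, h⟩ | ⟨n, hn, h⟩) | ⟨n, h⟩) <;>
      · have := floor_a_nonneg n
        show (0 : ℤ) < m
        omega
    · intro hm
      rcases beatty_cover m hm with ⟨k, hk, h⟩ | h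
      · rcases Nat.eq_or_lt_of_le hk with h1 | h1
        · right
          refine ⟨0, ?_⟩
          rw [← floor_b_succ, h, ← h1]
          simp
        · rcases beatty_cover ((k : ℤ) - 1) (by omega) with ⟨n, hn, e⟩ | ⟨n, hn, e⟩
          · left; right
            refine ⟨n, hn, ?_⟩
            rw [← floor_a_succ, ← e, h]
            simp
          · right
            refine ⟨n, ?_⟩
            rw [← floor_b_succ, ← e, h]
            simp
      · left; left; exact h
end

section
/- Let S be a homomorphism of the Thue–Morse language L_TM with values p = S(a), q = S(b), and set r = p + q. Then for every n ≥ 1, the set of values of S on words of length 2n in L_TM equals {rn, rn + q − p, rn + p − q} (as a set of integers), and the set of values of S on words of length 2n − 1 in L_TM equals {r(n−1) + p, r(n−1) + q}. -/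
/-- The Thue–Morse morphism `a ↦ ab`, `b ↦ ba` (here `a = false`, `b = true`),
extended to words by concatenation. -/
def tmMorph (w : List Bool) : List Bool :=
  w.flatMap fun x => if x then [true, false] else [false, true]

/-- The Thue–Morse word: the fixed point beginning with `a` of the Thue–Morse
morphism (the `n`-th letter is read off from a sufficiently high iterate on `a`). -/
def tmWord (n : ℕ) : Bool :=
  (tmMorph^[n + 1] [false]).getD n false

/-- The Thue–Morse language: nonempty finite factors of the Thue–Morse word. -/
def tmLang : Set (List Bool) :=
  {w | IsFactor tmWord w}

/-- The homomorphism determined by `p = S(a)`, `q = S(b)`: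
`S(w) = N_a(w)·p + N_b(w)·q`. -/
def wordValTM (p q : ℕ) (w : List Bool) : ℕ :=
  w.count false * p + w.count true * q

theorem tmMorph_length (w : List Bool) : (tmMorph w).length = 2 * w.length := by
  induction w with
  | nil => rfl
  | cons x w ih => cases x <;> simp [tmMorph] at * <;> omega

theorem tmMorph_cons (x : Bool) (w : List Bool) : tmMorph (x :: w) = x :: (!x) :: tmMorph w := by
  cases x <;> simp [tmMorph]

theorem tmMorph_append (u v : List Bool) : tmMorph (u ++ v) = tmMorph u ++ tmMorph v := by
  simp [tmMorph]

theorem tmMorph_iter_append (m : ℕ) (u v : List Bool) :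
    tmMorph^[m] (u ++ v) = tmMorph^[m] u ++ tmMorph^[m] v := by
  induction m generalizing u v with
  | zero => rfl
  | succ m ih => simp only [Function.iterate_succ_apply, tmMorph_append, ih]

theorem tmMorph_iter_length (m : ℕ) : (tmMorph^[m] [false]).length = 2 ^ m := by
  induction m with
  | zero => rfl
  | succ m ih => rw [Function.iterate_succ_apply', tmMorph_length, ih]; ring

theorem tmMorph_getD (w : List Bool) (i : ℕ) (hi : i < w.length) :
    (tmMorph w).getD (2 * i) false = w.getD i false ∧
    (tmMorph w).getD (2 * i + 1) false = !(w.getD i false) := by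
  induction w generalizing i with
  | nil => simp at hi
  | cons x w ih =>
    rw [tmMorph_cons]
    cases i with
    | zero => simp
    | succ i =>
      have := ih i (by simpa using hi)
      simpa [show 2 * (i + 1) = 2 * i + 1 + 1 by ring] using this

theorem iter_stable (m n d : ℕ) (h : n < 2 ^ m) :
    (tmMorph^[m + d] [false]).getD n false = (tmMorph^[m] [false]).getD n false := by
  induction d with
  | zero => rfl
  | succ d ih =>
    rw [← ih, ← add_assoc, Function.iterate_succ_apply]
    have h1 : tmMorph [false] = [false] ++ [true] := by simp [tmMorph]
    rw [h1, tmMorph_iter_append, List.getD_append]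
    rw [tmMorph_iter_length]
    exact lt_of_lt_of_le h (Nat.pow_le_pow_right (by norm_num) (by omega))

theorem tmWord_eq (m n : ℕ) (h : n < 2 ^ m) :
    (tmMorph^[m] [false]).getD n false = tmWord n := by
  have h2 : n < 2 ^ (n + 1) := lt_trans (Nat.lt_succ_self n) Nat.lt_two_pow_self
  unfold tmWord
  rw [← iter_stable m n (n + 1) h, ← iter_stable (n + 1) n m h2, add_comm]

theorem tmWord_even (n : ℕ) : tmWord (2 * n) = tmWord n := by
  have h : n < 2 ^ (2 * n) := lt_of_lt_of_le Nat.lt_two_pow_self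
    (Nat.pow_le_pow_right (by norm_num) (by omega))
  rw [← tmWord_eq (2 * n) n h]
  conv_lhs => unfold tmWord
  rw [Function.iterate_succ_apply']
  exact (tmMorph_getD _ n (by rw [tmMorph_iter_length]; exact h)).1

theorem tmWord_odd (n : ℕ) : tmWord (2 * n + 1) = !tmWord n := by
  have h : n < 2 ^ (2 * n + 1) := lt_of_lt_of_le Nat.lt_two_pow_self
    (Nat.pow_le_pow_right (by norm_num) (by omega))
  rw [← tmWord_eq (2 * n + 1) n h]
  conv_lhs => unfold tmWord
  rw [Function.iterate_succ_apply']
  exact (tmMorph_getD _ n (by rw [tmMorph_iter_length]; exact h)).2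

theorem tmWord_zero : tmWord 0 = false := by
  simp [tmWord, tmMorph]

theorem tmWord_one : tmWord 1 = true := by
  simpa [tmWord_zero] using tmWord_odd 0

theorem tmWord_compl (N k : ℕ) (h : k < 2 ^ N) : tmWord (2 ^ N + k) = !tmWord k := by
  induction N generalizing k with
  | zero =>
    have : k = 0 := by simpa using h
    subst this
    simp [tmWord_zero, tmWord_one]
  | succ N ih =>
    rw [pow_succ] at h
    obtain ⟨j, hj | hj⟩ := Nat.even_or_odd' k
    · rw [hj, show 2 ^ (N + 1) + 2 * j = 2 * (2 ^ N + j) by ring, tmWord_even, tmWord_even,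
        ih j (by omega)]
    · rw [hj, show 2 ^ (N + 1) + (2 * j + 1) = 2 * (2 ^ N + j) + 1 by ring, tmWord_odd, tmWord_odd,
        ih j (by omega)]

theorem tm_no_period (n : ℕ) (hn : 1 ≤ n) : ∃ k, tmWord k ≠ tmWord (k + n) := by
  induction n using Nat.strong_induction_on with
  | _ n ih =>
    obtain ⟨m, hm | hm⟩ := Nat.even_or_odd' n
    · obtain ⟨k, hk⟩ := ih m (by omega) (by omega)
      refine ⟨2 * k, ?_⟩
      rw [hm, ← mul_add, tmWord_even, tmWord_even]
      exact hk
    · by_contra! hc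
      have h1 := hc (2 * m)
      rw [hm, show 2 * m + (2 * m + 1) = 2 * (2 * m) + 1 by ring, tmWord_odd, tmWord_even] at h1
      cases h : tmWord m <;> simp [h] at h1

theorem tm_pair (n : ℕ) (hn : 1 ≤ n) (b : Bool) : ∃ k, tmWord k = b ∧ tmWord (k + n) = !b := by
  obtain ⟨k, hk⟩ := tm_no_period n hn
  have h1 : k + n < 2 ^ (k + n) := Nat.lt_two_pow_self
  by_cases hb : tmWord k = b
  · refine ⟨k, hb, ?_⟩
    subst hb
    cases h : tmWord k <;> cases h' : tmWord (k + n) <;> simp_all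
  · refine ⟨2 ^ (k + n) + k, ?_, ?_⟩
    · rw [tmWord_compl _ _ (by omega)]
      cases h : tmWord k <;> cases b <;> simp_all
    · rw [add_assoc, tmWord_compl _ _ h1]
      cases h : tmWord k <;> cases h' : tmWord (k + n) <;> cases b <;> simp_all

/-- The factor of length `L` at position `i`. -/
def tmFac (i L : ℕ) : List Bool := (List.range L).map fun j => tmWord (i + j)

/-- Value of a letter. -/
def letVal (p q : ℕ) (b : Bool) : ℕ := if b then q else p

theorem val_append (p q : ℕ) (u v : List Bool) :
    wordValTM p q (u ++ v) = wordValTM p q u + wordValTM p q v := by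
  simp [wordValTM]; ring

theorem val_single (p q : ℕ) (b : Bool) : wordValTM p q [b] = letVal p q b := by
  cases b <;> simp [wordValTM, letVal]

theorem tmFac_succ (i L : ℕ) : tmFac i (L + 1) = tmFac i L ++ [tmWord (i + L)] := by
  simp [tmFac, List.range_succ]

theorem tmFac_succ' (i L : ℕ) : tmFac i (L + 1) = [tmWord i] ++ tmFac (i + 1) L := by
  simp [tmFac, List.range_succ_eq_map]
  intro a _
  congr 1
  ring

theorem let_not (p q : ℕ) (b : Bool) : letVal p q b + letVal p q (!b) = p + q := by
  cases b <;> simp [letVal, add_comm]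

theorem val_even (p q k m : ℕ) : wordValTM p q (tmFac (2 * k) (2 * m)) = (p + q) * m := by
  induction m with
  | zero => simp [tmFac, wordValTM]
  | succ m ih =>
    rw [show 2 * (m + 1) = 2 * m + 1 + 1 by ring, tmFac_succ, tmFac_succ, val_append, val_append,
      ih, val_single, val_single, ← add_assoc, ← mul_add, tmWord_even, tmWord_odd, add_assoc,
      let_not]
    ring

theorem val_even_odd (p q k m : ℕ) : wordValTM p q (tmFac (2 * k) (2 * m + 1)) =
    (p + q) * m + letVal p q (tmWord (k + m)) := by
  rw [tmFac_succ, val_append, val_even, val_single, ← mul_add, tmWord_even]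

theorem val_odd_odd (p q k m : ℕ) : wordValTM p q (tmFac (2 * k + 1) (2 * m + 1)) =
    (p + q) * m + letVal p q (!tmWord k) := by
  rw [tmFac_succ', val_append, show 2 * k + 1 + 1 = 2 * (k + 1) by ring, val_even, val_single,
    tmWord_odd, add_comm]

theorem val_odd_even (p q k m : ℕ) : wordValTM p q (tmFac (2 * k + 1) (2 * m + 1 + 1)) =
    (p + q) * m + letVal p q (!tmWord k) + letVal p q (tmWord (k + (m + 1))) := by
  rw [tmFac_succ, val_append, val_odd_odd, val_single,
    show 2 * k + 1 + (2 * m + 1) = 2 * (k + (m + 1)) by ring, tmWord_even]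

theorem exists_iff (p q L v : ℕ) (hL : 1 ≤ L) :
    (∃ w ∈ tmLang, w.length = L ∧ wordValTM p q w = v) ↔
      ∃ i, wordValTM p q (tmFac i L) = v := by
  constructor
  · rintro ⟨w, ⟨_, i, hi⟩, hl, hv⟩
    refine ⟨i, ?_⟩
    rw [hl] at hi
    rw [← hv, hi]
    rfl
  · rintro ⟨i, hi⟩
    have hl : (tmFac i L).length = L := by simp [tmFac]
    refine ⟨tmFac i L, ⟨?_, i, ?_⟩, hl, hi⟩
    · intro h
      rw [h] at hl
      simp at hl
      omega
    · rw [hl]; rfl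

theorem tm_values_by_length (p q : ℕ) (hp : 0 < p) (hq : 0 < q) (r : ℕ) (hr : r = p + q)
    (n : ℕ) (hn : 1 ≤ n) :
    {v : ℕ | ∃ w ∈ tmLang, w.length = 2 * n ∧ wordValTM p q w = v} =
      {v : ℕ | (v : ℤ) = r * n ∨ (v : ℤ) = r * n + q - p ∨ (v : ℤ) = r * n + p - q} ∧
    {v : ℕ | ∃ w ∈ tmLang, w.length = 2 * n - 1 ∧ wordValTM p q w = v} =
      {v : ℕ | (v : ℤ) = r * ((n : ℤ) - 1) + p ∨ (v : ℤ) = r * ((n : ℤ) - 1) + q} := by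
  obtain ⟨m, rfl⟩ : ∃ m, n = m + 1 := ⟨n - 1, by omega⟩
  subst hr
  constructor
  · ext v
    simp only [Set.mem_setOf_eq]
    rw [exists_iff p q _ v (by omega)]
    zify
    push_cast
    constructor
    · rintro ⟨i, hi⟩
      obtain ⟨k, rfl | rfl⟩ := Nat.even_or_odd' i
      · left
        rw [← hi, val_even]; push_cast; ring
      · rw [show 2 * (m + 1) = 2 * m + 1 + 1 by ring, val_odd_even] at hi
        rw [← hi]
        cases tmWord k <;> cases tmWord (k + (m + 1)) <;> simp [letVal]
        · left; ring
        · right; left; ring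
        · right; right; ring
        · left; ring
    · rintro (h | h | h)
      · refine ⟨2 * 0, ?_⟩
        rw [val_even, h]; push_cast; ring
      · obtain ⟨k, h1, h2⟩ := tm_pair (m + 1) hn false
        refine ⟨2 * k + 1, ?_⟩
        rw [show 2 * (m + 1) = 2 * m + 1 + 1 by ring, val_odd_even, h1, h2, h]
        simp [letVal]; ring
      · obtain ⟨k, h1, h2⟩ := tm_pair (m + 1) hn true
        refine ⟨2 * k + 1, ?_⟩
        rw [show 2 * (m + 1) = 2 * m + 1 + 1 by ring, val_odd_even, h1, h2, h]
        simp [letVal]; ring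
  · ext v
    simp only [Set.mem_setOf_eq]
    rw [exists_iff p q _ v (by omega), show 2 * (m + 1) - 1 = 2 * m + 1 by omega]
    zify
    push_cast
    constructor
    · rintro ⟨i, hi⟩
      obtain ⟨k, rfl | rfl⟩ := Nat.even_or_odd' i
      · rw [← hi, val_even_odd]
        cases tmWord (k + m) <;> simp [letVal]
      · rw [← hi, val_odd_odd]
        cases tmWord k <;> simp [letVal]
    · rintro (h | h)
      · refine ⟨2 * 1 + 1, ?_⟩
        rw [val_odd_odd, h, tmWord_one]
        simp [letVal]
      · refine ⟨2 * 0 + 1, ?_⟩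
        rw [val_odd_odd, h, tmWord_zero]
        simp [letVal]
end

section
/- Let θ be the morphism on the alphabet {a,b,c,d} given by θ(a) = abcba, θ(b) = bcdcb, θ(c) = cdadc, θ(d) = dabad, let x = θ^∞(a) be its fixed point beginning with a, and let L_θ be the set of nonempty finite factors of x. Let S⊕ be the homomorphism into ℤ × ℤ determined by S⊕(a) = (1,0), S⊕(b) = (0,1), S⊕(c) = (−1,0), S⊕(d) = (0,−1), i.e., S⊕(w) = N_a(w)·(1,0) + N_b(w)·(0,1) + N_c(w)·(−1,0) + N_d(w)·(0,−1). Then S⊕(L_θ) = ℤ × ℤ: every pair of integers is the image of some word in L_θ. -/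
/-- The perfect symmetric 5-folding morphism on `{a,b,c,d}` (here `a = 0`, `b = 1`,
`c = 2`, `d = 3`): `θ(a) = abcba`, `θ(b) = bcdcb`, `θ(c) = cdadc`, `θ(d) = dabad`,
on single letters. -/
def pf5Sub (x : Fin 4) : List (Fin 4) :=
  if x = 0 then [0, 1, 2, 1, 0]
  else if x = 1 then [1, 2, 3, 2, 1]
  else if x = 2 then [2, 3, 0, 3, 2]
  else [3, 0, 1, 0, 3]

/-- The morphism `θ` extended to words by concatenation. -/
def pf5Morph (w : List (Fin 4)) : List (Fin 4) :=
  w.flatMap pf5Sub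

/-- The fixed point `x = θ^∞(a)` beginning with `a` (the `n`-th letter is read off
from a sufficiently high iterate on `a`). -/
def pf5Word (n : ℕ) : Fin 4 :=
  (pf5Morph^[n + 1] [0]).getD n 0

/-- The language generated by `θ`: nonempty finite factors of `x = θ^∞(a)`. -/
def pf5Lang : Set (List (Fin 4)) :=
  {w | IsFactor pf5Word w}

/-- The homomorphism `S⊕` into `ℤ × ℤ` with `S⊕(a) = (1,0)`, `S⊕(b) = (0,1)`,
`S⊕(c) = (−1,0)`, `S⊕(d) = (0,−1)`. -/
def Splus (w : List (Fin 4)) : ℤ × ℤ :=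
  ((w.count 0 : ℤ) - (w.count 2 : ℤ), (w.count 1 : ℤ) - (w.count 3 : ℤ))

theorem pf5_morph_length (w : List (Fin 4)) : (pf5Morph w).length = 5 * w.length := by
  induction w with
  | nil => rfl
  | cons a w ih =>
    have h : (pf5Sub a).length = 5 := by clear * -; revert a; decide
    simp only [pf5Morph, List.flatMap_cons, List.length_append, List.length_cons] at *
    omega

theorem pf5_morph_getD (w : List (Fin 4)) (p j : ℕ) (hp : p < w.length) (hj : j < 5) :
    (pf5Morph w).getD (5 * p + j) 0 = (pf5Sub (w.getD p 0)).getD j 0 := by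
  induction w generalizing p with
  | nil => simp at hp
  | cons a w ih =>
    have h : (pf5Sub a).length = 5 := by clear * -; revert a; decide
    have e : pf5Morph (a :: w) = pf5Sub a ++ pf5Morph w := by simp [pf5Morph]
    rw [e]
    cases p with
    | zero =>
      rw [List.getD_append _ _ _ _ (by omega)]
      simp
    | succ p =>
      rw [List.getD_append_right _ _ _ _ (by omega), h]
      have : 5 * (p + 1) + j - 5 = 5 * p + j := by omega
      rw [this, ih p (by simpa using hp)]
      simp

theorem pf5_iter_length (n : ℕ) : (pf5Morph^[n] [0]).length = 5 ^ n := by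
  induction n with
  | zero => rfl
  | succ n ih => rw [Function.iterate_succ_apply', pf5_morph_length, ih, pow_succ, mul_comm]

theorem pf5_iter_step (n : ℕ) : ∀ i < 5 ^ n,
    (pf5Morph^[n + 1] [0]).getD i 0 = (pf5Morph^[n] [0]).getD i 0 := by
  induction n with
  | zero =>
    intro i hi
    have : i = 0 := by simpa using hi
    subst this
    decide
  | succ n ih =>
    intro i hi
    have hlt : i / 5 < 5 ^ n := by rw [pow_succ] at hi; omega
    have hlt2 : i / 5 < 5 ^ (n + 1) := by rw [pow_succ]; omega
    have hd : i = 5 * (i / 5) + i % 5 := by omega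
    have e1 : pf5Morph^[n + 1 + 1] [0] = pf5Morph (pf5Morph^[n + 1] [0]) :=
      Function.iterate_succ_apply' _ _ _
    have e2 : (pf5Morph^[n + 1] [0]).getD i 0 = (pf5Morph (pf5Morph^[n] [0])).getD i 0 := by
      rw [Function.iterate_succ_apply']
    rw [e1, e2, hd,
      pf5_morph_getD _ _ _ (by rw [pf5_iter_length]; exact hlt2) (by omega),
      pf5_morph_getD _ _ _ (by rw [pf5_iter_length]; exact hlt) (by omega), ih _ hlt]

theorem pf5_iter_add (n k i : ℕ) (hi : i < 5 ^ n) :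
    (pf5Morph^[n + k] [0]).getD i 0 = (pf5Morph^[n] [0]).getD i 0 := by
  induction k with
  | zero => rfl
  | succ k ih =>
    rw [← ih, ← add_assoc]
    exact pf5_iter_step _ _ (hi.trans_le (Nat.pow_le_pow_right (by norm_num) (by omega)))

theorem pf5_word_eq (n i : ℕ) (hi : i < 5 ^ n) :
    pf5Word i = (pf5Morph^[n] [0]).getD i 0 := by
  have h1 : i < 5 ^ (i + 1) :=
    (Nat.lt_pow_self (by norm_num)).trans (Nat.pow_lt_pow_right (by norm_num) (by omega))
  rw [pf5Word, ← pf5_iter_add n (i + 1) i hi, ← pf5_iter_add (i + 1) n i h1, add_comm n]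

theorem pf5_word_rec (p j : ℕ) (hj : j < 5) :
    pf5Word (5 * p + j) = (pf5Sub (pf5Word p)).getD j 0 := by
  have h1 : p < 5 ^ (p + 1) :=
    (Nat.lt_pow_self (by norm_num)).trans (Nat.pow_lt_pow_right (by norm_num) (by omega))
  have h2 : 5 * p + j < 5 ^ (p + 1 + 1) := by rw [pow_succ]; omega
  rw [pf5_word_eq _ _ h2, Function.iterate_succ_apply',
    pf5_morph_getD _ _ _ (by rw [pf5_iter_length]; exact h1) hj, ← pf5_word_eq _ _ h1]

/-- Sum of the prefix of length `n`. -/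
def pf5Pre (n : ℕ) : ℤ × ℤ := Splus ((List.range n).map pf5Word)

theorem pf5_splus_append (u v : List (Fin 4)) : Splus (u ++ v) = Splus u + Splus v := by
  simp only [Splus, List.count_append, Prod.mk_add_mk, Prod.mk.injEq]
  push_cast
  constructor <;> ring

theorem pf5_pre_succ (n : ℕ) : pf5Pre (n + 1) = pf5Pre n + Splus [pf5Word n] := by
  rw [pf5Pre, List.range_succ, List.map_append, pf5_splus_append]; rfl

theorem pf5_pre_factor (p l : ℕ) :
    Splus ((List.range l).map fun j => pf5Word (p + j)) = pf5Pre (p + l) - pf5Pre p := by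
  rw [pf5Pre, List.range_add, List.map_append, pf5_splus_append, List.map_map]
  simp [pf5Pre, Function.comp_def]

theorem pf5_pre_add (p : ℕ) (k : ℕ) (hk : k ≤ 5) :
    pf5Pre (5 * p + k) = pf5Pre (5 * p) + Splus ((pf5Sub (pf5Word p)).take k) := by
  have h := pf5_pre_factor (5 * p) k
  have e : ((List.range k).map fun j => pf5Word (5 * p + j)) =
      (pf5Sub (pf5Word p)).take k := by
    have : ((List.range k).map fun j => pf5Word (5 * p + j)) =
        (List.range k).map fun j => (pf5Sub (pf5Word p)).getD j 0 := by
      apply List.map_congr_left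
      intro j hj
      exact pf5_word_rec p j (by have := List.mem_range.1 hj; omega)
    rw [this]
    generalize pf5Word p = c
    interval_cases k <;> revert c <;> decide
  rw [e] at h
  rw [h]; abel

theorem pf5_pre_mul (p : ℕ) : pf5Pre (5 * p) =
    ((pf5Pre p).1 - 2 * (pf5Pre p).2, (pf5Pre p).2 + 2 * (pf5Pre p).1) := by
  induction p with
  | zero => decide
  | succ p ih =>
    rw [mul_add, mul_one, pf5_pre_add p 5 le_rfl, ih, pf5_pre_succ]
    have key : ∀ c : Fin 4, Splus ((pf5Sub c).take 5) =
        ((Splus [c]).1 - 2 * (Splus [c]).2, (Splus [c]).2 + 2 * (Splus [c]).1) := by decide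
    rw [key]
    ext <;> simp <;> ring

/-- `(a,b)` is realised between an occurrence of letter `0` and an occurrence of `m`. -/
def pf5Good (a b : ℤ) (m : Fin 4) : Prop :=
  ∃ p q, p ≤ q ∧ pf5Word p = 0 ∧ pf5Word q = m ∧ pf5Pre q - pf5Pre p = (a, b)

theorem pf5_good_step (a b : ℤ) (m : Fin 4) (k : ℕ) (hk : k < 5) (h : pf5Good a b m) :
    pf5Good (a - 2 * b + (Splus ((pf5Sub m).take k)).1)
      (b + 2 * a + (Splus ((pf5Sub m).take k)).2) ((pf5Sub m).getD k 0) := by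
  obtain ⟨p, q, hpq, hp, hq, hz⟩ := h
  refine ⟨5 * p, 5 * q + k, by omega, ?_, ?_, ?_⟩
  · have := pf5_word_rec p 0 (by norm_num)
    rw [hp] at this
    exact this
  · rw [pf5_word_rec q k hk, hq]
  · rw [pf5_pre_add q k hk.le, pf5_pre_mul, pf5_pre_mul, hq]
    have h1 := congrArg Prod.fst hz
    have h2 := congrArg Prod.snd hz
    simp only [Prod.fst_sub, Prod.snd_sub] at h1 h2
    ext <;> simp <;> rw [← h1, ← h2] <;> ring

theorem pf5_good_of_list (p q : ℕ) (a b : ℤ) (m : Fin 4) (hpq : p ≤ q) (hq : q < 125)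
    (h : ((pf5Morph^[3] [0]).getD p 0 = 0 ∧ (pf5Morph^[3] [0]).getD q 0 = m) ∧
      Splus ((pf5Morph^[3] [0]).take q) - Splus ((pf5Morph^[3] [0]).take p) = (a, b)) :
    pf5Good a b m := by
  have key : ∀ n < 125, pf5Pre n = Splus ((pf5Morph^[3] [0]).take n) := by
    intro n hn
    rw [pf5Pre]
    congr 1
    have hl : (pf5Morph^[3] [0]).length = 125 := by rw [pf5_iter_length]; norm_num
    apply List.ext_getElem
    · rw [List.length_take, hl]; simp; omega
    · intro i h1 h2
      have hi : i < n := by simpa using h1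
      rw [List.getElem_take, List.getElem_map, List.getElem_range,
        pf5_word_eq 3 i (by norm_num; omega), List.getD_eq_getElem]
  refine ⟨p, q, hpq, ?_, ?_, ?_⟩
  · rw [pf5_word_eq 3 p (by norm_num; omega)]; exact h.1.1
  · rw [pf5_word_eq 3 q (by norm_num; omega)]; exact h.1.2
  · rw [key p (by omega), key q hq]; exact h.2

set_option maxRecDepth 20000 in
theorem pf5_good_base (a b : ℤ) (m : Fin 4) (hs : a ^ 2 + b ^ 2 ≤ 2)
    (hpar : (a + b + (m : ℕ)) % 2 = 0) : pf5Good a b m := by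
  have ha1 : -1 ≤ a := by nlinarith
  have ha2 : a ≤ 1 := by nlinarith
  have hb1 : -1 ≤ b := by nlinarith
  have hb2 : b ≤ 1 := by nlinarith
  interval_cases a <;> interval_cases b <;> fin_cases m <;>
    first
    | (exfalso; revert hpar; decide)
    | exact pf5_good_of_list 24 38 (-1) (-1) 0 (by decide) (by decide) (by decide)
    | exact pf5_good_of_list 4 14 (-1) (-1) 2 (by decide) (by decide) (by decide)
    | exact pf5_good_of_list 4 9 (-1) (0) 1 (by decide) (by decide) (by decide)
    | exact pf5_good_of_list 4 13 (-1) (0) 3 (by decide) (by decide) (by decide)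
    | exact pf5_good_of_list 20 38 (-1) (1) 0 (by decide) (by decide) (by decide)
    | exact pf5_good_of_list 4 10 (-1) (1) 2 (by decide) (by decide) (by decide)
    | exact pf5_good_of_list 12 15 (0) (-1) 1 (by decide) (by decide) (by decide)
    | exact pf5_good_of_list 32 35 (0) (-1) 3 (by decide) (by decide) (by decide)
    | exact pf5_good_of_list 0 0 (0) (0) 0 (by decide) (by decide) (by decide)
    | exact pf5_good_of_list 4 8 (0) (0) 2 (by decide) (by decide) (by decide)
    | exact pf5_good_of_list 0 3 (0) (1) 1 (by decide) (by decide) (by decide)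
    | exact pf5_good_of_list 4 7 (0) (1) 3 (by decide) (by decide) (by decide)
    | exact pf5_good_of_list 32 38 (1) (-1) 0 (by decide) (by decide) (by decide)
    | exact pf5_good_of_list 12 14 (1) (-1) 2 (by decide) (by decide) (by decide)
    | exact pf5_good_of_list 0 1 (1) (0) 1 (by decide) (by decide) (by decide)
    | exact pf5_good_of_list 12 13 (1) (0) 3 (by decide) (by decide) (by decide)
    | exact pf5_good_of_list 36 38 (1) (1) 0 (by decide) (by decide) (by decide)
    | exact pf5_good_of_list 0 2 (1) (1) 2 (by decide) (by decide) (by decide)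

theorem pf5_good_all (n : ℕ) : ∀ (a b : ℤ) (m : Fin 4), a ^ 2 + b ^ 2 ≤ n →
    (a + b + (m : ℕ)) % 2 = 0 → pf5Good a b m := by
  induction n with
  | zero => intro a b m h; exact pf5_good_base a b m (by push_cast at h; linarith)
  | succ n ih =>
    intro a b m h hpar
    by_cases hs : a ^ 2 + b ^ 2 ≤ 2
    · exact pf5_good_base a b m hs hpar
    push_cast at h
    -- choose the last digit
    have hdig : ∀ (m : Fin 4) (r : Fin 5), ∃ (k : Fin 5) (m' : Fin 4),
        (pf5Sub m').getD k 0 = m ∧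
        ((Splus ((pf5Sub m').take k)).1 + 2 * (Splus ((pf5Sub m').take k)).2) % 5 = ((r : ℕ) : ℤ) ∧
        ((Splus ((pf5Sub m').take k)).1 + (Splus ((pf5Sub m').take k)).2
          + (m' : ℕ) + (m : ℕ)) % 2 = 0 ∧
        (Splus ((pf5Sub m').take k)).1 ^ 2 + (Splus ((pf5Sub m').take k)).2 ^ 2 ≤ 4 := by
      decide
    obtain ⟨r, hr⟩ : ∃ r : Fin 5, ((r : ℕ) : ℤ) = (a + 2 * b) % 5 :=
      ⟨⟨((a + 2 * b) % 5).toNat, by omega⟩, by simp; omega⟩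
    obtain ⟨k, m', hm, h5, h2, h4⟩ := hdig m r
    have step := fun a' b' => pf5_good_step a' b' m' k k.2
    rw [hm] at step
    generalize (Splus ((pf5Sub m').take k)).1 = c at *
    generalize (Splus ((pf5Sub m').take k)).2 = d at *
    obtain ⟨a', ha'⟩ : ∃ a', a - c + 2 * (b - d) = 5 * a' :=
      ⟨(a - c + 2 * (b - d)) / 5, by omega⟩
    obtain ⟨b', hb'⟩ : ∃ b', b - d - 2 * (a - c) = 5 * b' :=
      ⟨(b - d - 2 * (a - c)) / 5, by omega⟩
    have ea : a = a' - 2 * b' + c := by omega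
    have eb : b = b' + 2 * a' + d := by omega
    have hG : pf5Good a' b' m' := by
      apply ih
      · have e5 : 5 * (a' ^ 2 + b' ^ 2) = (a - c) ^ 2 + (b - d) ^ 2 := by
          rw [ea, eb]; ring
        have : a' ^ 2 + b' ^ 2 < a ^ 2 + b ^ 2 := by
          nlinarith [sq_nonneg (a + c), sq_nonneg (b + d)]
        omega
      · omega
    have := step a' b' hG
    rw [ea, eb]
    exact this

theorem pf5_mem_of_lt (p q : ℕ) (h : p < q) :
    ∃ w ∈ pf5Lang, Splus w = pf5Pre q - pf5Pre p := by
  refine ⟨(List.range (q - p)).map fun j => pf5Word (p + j), ⟨?_, p, by simp⟩, ?_⟩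
  · intro h0
    have := congrArg List.length h0
    simp at this
    omega
  · rw [pf5_pre_factor, Nat.add_sub_cancel' h.le]

theorem pf5_image_eq_univ :
    {v : ℤ × ℤ | ∃ w ∈ pf5Lang, Splus w = v} = Set.univ := by
  ext ⟨a, b⟩
  simp only [Set.mem_ofPred_eq, Set.mem_univ, iff_true]
  -- a letter of the right parity, chosen different from `0`
  obtain ⟨m, hm0, hm⟩ : ∃ m : Fin 4, m ≠ 0 ∧ (a + b + (m : ℕ)) % 2 = 0 := by
    rcases Int.emod_two_eq_zero_or_one (a + b) with h | h
    · exact ⟨2, by decide, by simp; omega⟩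
    · exact ⟨1, by decide, by simp; omega⟩
  obtain ⟨p, q, hpq, hp, hq, hz⟩ :=
    pf5_good_all (a ^ 2 + b ^ 2).toNat a b m (Int.self_le_toNat _) hm
  have hlt : p < q := by
    rcases hpq.lt_or_eq with h | h
    · exact h
    · subst h
      exact absurd (hq.symm.trans hp) hm0
  rw [← hz]
  exact pf5_mem_of_lt p q hlt
end
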